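/- Determinism of Open CbNeed: the reduction →ond on programs is deterministic, i.e., if p →ond q₁ and p →ond q₂ then q₁ = q₂ (up to α-renaming). -/

import Mathlib

/-! ## Terms of the pure λ-calculus (named syntax) -/

inductive Term : Type
  | var : ℕ → Term
  | lam : ℕ → Term → Term
  | app : Term → Term → Term
  deriving DecidableEq

namespace Term

/-- Size of a term: |x| = 1, |λx.t| = |t|+1, |t u| = |t|+|u|+1. -/
def size : Term → ℕ
  | var _ => 1
  | lam _ t => size t + 1
  | app t u => size t + size u + 1

/-- Free variables of a term. -/
def fv : Term → Finset ℕ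
  | var x => {x}
  | lam x t => (fv t).erase x
  | app t u => fv t ∪ fv u

/-- Meta-level substitution t{x←u}. -/
def subst (x : ℕ) (u : Term) : Term → Term
  | var y => if y = x then u else var y
  | lam y t => if y = x then lam y t else lam y (subst x u t)
  | app t s => app (subst x u t) (subst x u s)

def isVarB : Term → Bool
  | var _ => true
  | _ => false

/-- Values are abstractions (variables are not values). -/
def IsValue (t : Term) : Prop := ∃ x u, t = lam x u

/-- Needed variables of a term. -/
def nv : Term → Finset ℕ
  | var x => {x}
  | lam _ _ => ∅
  | app t u => nv t ∪ nv u

/-- Applied variables of a term. -/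
def anv : Term → Finset ℕ
  | var _ => ∅
  | lam _ _ => ∅
  | app (var x) u => insert x (anv u)
  | app (lam y t) u => anv (lam y t) ∪ anv u
  | app (app t s) u => anv (app t s) ∪ anv u

/-- Unapplied variables of a term. -/
def unv : Term → Finset ℕ
  | var x => {x}
  | lam _ _ => ∅
  | app (var _) u => unv u
  | app (lam y t) u => unv (lam y t) ∪ unv u
  | app (app t s) u => unv (app t s) ∪ unv u

end Term

/-! ## Inert terms and fireballs: i ::= x | i f,  f ::= v | i -/

mutual
  inductive Term.Inert : Term → Prop
    | var (x : ℕ) : Term.Inert (Term.var x)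
    | app {i f : Term} : Term.Inert i → Term.Fireball f → Term.Inert (Term.app i f)
  inductive Term.Fireball : Term → Prop
    | val {x : ℕ} {t : Term} : Term.Fireball (Term.lam x t)
    | inert {i : Term} : Term.Inert i → Term.Fireball i
end

/-- Non-variable inert terms i⁺. -/
def Term.InertPlus (t : Term) : Prop := t.Inert ∧ ∀ x, t ≠ Term.var x

/-! ## β-reduction (closure of the root rule under arbitrary term contexts) -/

inductive Beta : Term → Term → Prop
  | beta (x : ℕ) (t u : Term) : Beta (Term.app (Term.lam x t) u) (Term.subst x u t)
  | lam {t t' : Term} (x : ℕ) : Beta t t' → Beta (Term.lam x t) (Term.lam x t')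
  | appL {t t' : Term} (u : Term) : Beta t t' → Beta (Term.app t u) (Term.app t' u)
  | appR {u u' : Term} (t : Term) : Beta u u' → Beta (Term.app t u) (Term.app t u')

/-- `iterRel R n a b`: an n-step R-reduction sequence from a to b. -/
def iterRel {α : Type} (R : α → α → Prop) : ℕ → α → α → Prop
  | 0 => Eq
  | n + 1 => fun a c => ∃ b, R a b ∧ iterRel R n b c

/-! ## Environments and programs -/

/-- Environments are finite lists of explicit substitutions, written
left-to-right, i.e. E[x←t] is `E ++ [(x, t)]`. -/
abbrev Env := List (ℕ × Term)

def Env.dom (E : Env) : Finset ℕ := (E.map Prod.fst).toFinset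

/-- Content of the leftmost explicit substitution on x. -/
def Env.lookupES : Env → ℕ → Option Term
  | [], _ => none
  | (y, t) :: E, x => if y = x then some t else Env.lookupES E x

structure Program where
  tm : Term
  env : Env

/-- p@[x←u] : appending an explicit substitution at the end of the environment. -/
def Program.appES (p : Program) (x : ℕ) (u : Term) : Program := ⟨p.tm, p.env ++ [(x, u)]⟩

/-- One step of the needed-variables computation along an explicit substitution. -/
def nvStep (V : Finset ℕ) (e : ℕ × Term) : Finset ℕ :=
  if e.1 ∈ V then (V.erase e.1) ∪ Term.nv e.2 else V

/-- Needed variables of a program. -/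
def Program.nv (p : Program) : Finset ℕ := p.env.foldl nvStep p.tm.nv

/-- One step of the applied-variables computation (carrying needed variables). -/
def anvStep : Finset ℕ × Finset ℕ → ℕ × Term → Finset ℕ × Finset ℕ
  | (N, A), (x, u) =>
    (nvStep N (x, u),
      if x ∈ N then
        match u with
        | Term.var y => if x ∈ A then (A.erase x) ∪ {y} else A.erase x
        | _ => (A.erase x) ∪ Term.anv u
      else A)

/-- Applied variables of a program. -/
def Program.anv (p : Program) : Finset ℕ :=
  (p.env.foldl anvStep (p.tm.nv, p.tm.anv)).2

/-- One step of the unapplied-variables computation (carrying needed variables). -/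
def unvStep : Finset ℕ × Finset ℕ → ℕ × Term → Finset ℕ × Finset ℕ
  | (N, U), (x, u) =>
    (nvStep N (x, u),
      if x ∈ U ∨ (x ∈ N ∧ u.isVarB = false) then (U.erase x) ∪ Term.unv u else U)

/-- Unapplied variables of a program. -/
def Program.unv (p : Program) : Finset ℕ :=
  (p.env.foldl unvStep (p.tm.nv, p.tm.unv)).2

/-- Unfolding of a program into a term: unf(t, ε) = t, unf(t, E[x←u]) = unf(t, E){x←u}. -/
def Program.unf (p : Program) : Term :=
  p.env.foldl (fun s e => Term.subst e.1 e.2 s) p.tm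

/-! ## Term contexts H ::= ⟨·⟩ | H t | i H (i inert, enforced by WF) -/

inductive HCtx : Type
  | hole : HCtx
  | appL : HCtx → Term → HCtx
  | appR : Term → HCtx → HCtx

namespace HCtx

/-- Well-formedness: in i H, the left part i must be an inert term. -/
def WF : HCtx → Prop
  | hole => True
  | appL H _ => WF H
  | appR i H => Term.Inert i ∧ WF H

def plug : HCtx → Term → Term
  | hole, t => t
  | appL H u, t => Term.app (plug H t) u
  | appR i H, t => Term.app i (plug H t)

def nv : HCtx → Finset ℕ
  | hole => ∅
  | appL H _ => nv H
  | appR i H => Term.nv i ∪ nv H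

def anv : HCtx → Finset ℕ
  | hole => ∅
  | appL H _ => anv H
  | appR i H => Term.anv i ∪ anv H

def unv : HCtx → Finset ℕ
  | hole => ∅
  | appL H _ => unv H
  | appR i H => Term.unv i ∪ unv H

end HCtx

/-- Applicative term contexts H@ ::= ⟨·⟩ t | H@ t | i H@. -/
inductive HCtx.IsApp : HCtx → Prop
  | base (t : Term) : HCtx.IsApp (HCtx.appL HCtx.hole t)
  | appL {H : HCtx} (t : Term) : HCtx.IsApp H → HCtx.IsApp (HCtx.appL H t)
  | appR {H : HCtx} {i : Term} : Term.Inert i → HCtx.IsApp H → HCtx.IsApp (HCtx.appR i H)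

/-! ## Program contexts: hole in the term part (tc) or inside an ES (ec) -/

inductive PCtx : Type
  | tc : HCtx → Env → PCtx
  | ec : Term → Env → ℕ → HCtx → Env → PCtx

namespace PCtx

/-- P@[x←u] : appending an explicit substitution at the end of the environment of P. -/
def appES : PCtx → ℕ → Term → PCtx
  | tc H E, x, u => tc H (E ++ [(x, u)])
  | ec t E1 y H E2, x, u => ec t E1 y H (E2 ++ [(x, u)])

/-- Plugging a term into a program context. -/
def plugT : PCtx → Term → Program
  | tc H E, t => ⟨H.plug t, E⟩
  | ec u E1 x H E2, t => ⟨u, E1 ++ (x, H.plug t) :: E2⟩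

/-- Plugging a program into a program context: the plugged environment is appended
right after the position of the hole. -/
def plugP : PCtx → Program → Program
  | tc H E, q => ⟨H.plug q.tm, q.env ++ E⟩
  | ec u E1 x H E2, q => ⟨u, E1 ++ (x, H.plug q.tm) :: (q.env ++ E2)⟩

/-- Variables bound by the environment of P. -/
def dom : PCtx → Finset ℕ
  | tc _ E => Env.dom E
  | ec _ E1 y _ E2 => insert y (Env.dom E1 ∪ Env.dom E2)

/-- P(x): content of the leftmost explicit substitution on x occurring after the hole. -/
def lookup : PCtx → ℕ → Option Term
  | tc _ E, x => Env.lookupES E x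
  | ec _ _ _ _ E2, x => Env.lookupES E2 x

/-- (P⟨x⟩)@[x←H] : plug the variable x in the hole of P and append the ES [x←H],
whose content H now contains the hole. -/
def hered (P : PCtx) (x : ℕ) (H : HCtx) : PCtx :=
  ec (P.plugT (Term.var x)).tm (P.plugT (Term.var x)).env x H []

end PCtx

/-! ## Open CbNeed evaluation contexts P ∈ E_V -/

inductive OEC : PCtx → Finset ℕ → Prop
  | ax {H : HCtx} : H.WF → OEC (PCtx.tc H []) H.nv
  | gc {P : PCtx} {V : Finset ℕ} {x : ℕ} (t : Term) :
      OEC P V → x ∉ V → x ∉ P.dom → OEC (P.appES x t) V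
  | inert {P : PCtx} {V : Finset ℕ} {x : ℕ} {i : Term} :
      OEC P V → x ∈ V → Term.Inert i → x ∉ P.dom →
      OEC (P.appES x i) ((V.erase x) ∪ i.nv)
  | her {P : PCtx} {V : Finset ℕ} {x : ℕ} {H : HCtx} :
      OEC P V → x ∉ V → x ∉ P.dom → H.WF →
      OEC (P.hered x H) (V ∪ H.nv)

/-! ## Open CbNeed reduction -/

inductive StepOM : Program → Program → Prop
  | mk {P : PCtx} {V : Finset ℕ} {x : ℕ} {t u : Term} :
      OEC P V →
      StepOM (P.plugT (Term.app (Term.lam x t) u)) (P.plugP ⟨t, [(x, u)]⟩)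

inductive StepOE : Program → Program → Prop
  | mk {P : PCtx} {V : Finset ℕ} {x : ℕ} {v : Term} :
      OEC P V → P.lookup x = some v → v.IsValue →
      StepOE (P.plugT (Term.var x)) (P.plugT v)

def StepOnd (p q : Program) : Prop := StepOM p q ∨ StepOE p q

/-! ## Open CbNeed normal programs -/

inductive PInert : Program → Prop
  | ax {i : Term} : i.Inert → PInert ⟨i, []⟩
  | inert {p : Program} {x : ℕ} {i : Term} :
      PInert p → x ∈ p.nv → i.Inert → PInert (p.appES x i)
  | gc {p : Program} {x : ℕ} (t : Term) :
      PInert p → x ∉ p.nv → PInert (p.appES x t)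

inductive PAbs : Program → Prop
  | ax {v : Term} : v.IsValue → PAbs ⟨v, []⟩
  | gc {p : Program} {x : ℕ} (t : Term) : PAbs p → PAbs (p.appES x t)

def ONorm (p : Program) : Prop := PInert p ∨ PAbs p

/-! ## Useful Open CbNeed: multiplicative and exponential evaluation contexts -/

def upd (S : Finset ℕ) (x y : ℕ) : Finset ℕ := if x ∈ S then (S.erase x) ∪ {y} else S

inductive MEC : PCtx → Finset ℕ → Finset ℕ → Prop
  | ax {H : HCtx} : H.WF → MEC (PCtx.tc H []) H.unv H.anv
  | var {P : PCtx} {U A : Finset ℕ} {x y : ℕ} :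
      MEC P U A → x ∈ U ∪ A → x ∉ P.dom →
      MEC (P.appES x (Term.var y)) (upd U x y) (upd A x y)
  | gc {P : PCtx} {U A : Finset ℕ} {x : ℕ} (t : Term) :
      MEC P U A → x ∉ U ∪ A → x ∉ P.dom → MEC (P.appES x t) U A
  | inert {P : PCtx} {U A : Finset ℕ} {x : ℕ} {i : Term} :
      MEC P U A → x ∈ U ∪ A → i.InertPlus → x ∉ P.dom →
      MEC (P.appES x i) ((U.erase x) ∪ i.unv) ((A.erase x) ∪ i.anv)
  | val {P : PCtx} {U A : Finset ℕ} {x : ℕ} {v : Term} :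
      MEC P U A → x ∈ U → x ∉ A → v.IsValue → x ∉ P.dom →
      MEC (P.appES x v) (U.erase x) A
  | her {P : PCtx} {U A : Finset ℕ} {x : ℕ} {H : HCtx} :
      MEC P U A → x ∉ U ∪ A → x ∉ P.dom → H.WF →
      MEC (P.hered x H) (U ∪ H.unv) (A ∪ H.anv)

/-- Exponential evaluation contexts P ∈ E@_{U,A}; the last (natural number) index
counts the number of applications of rule (e_NA) in the derivation. -/
inductive EEC : PCtx → Finset ℕ → Finset ℕ → ℕ → Prop
  | ax1 {H : HCtx} : H.IsApp → EEC (PCtx.tc H []) H.unv H.anv 0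
  | ax2 {P : PCtx} {U A : Finset ℕ} {x : ℕ} {H : HCtx} :
      MEC P U A → x ∉ U ∪ A → x ∉ P.dom → H.IsApp →
      EEC (P.hered x H) ((U.erase x) ∪ H.unv) (A ∪ H.anv) 0
  | var {P : PCtx} {U A : Finset ℕ} {k : ℕ} {x y : ℕ} :
      EEC P U A k → x ∈ U ∪ A → x ∉ P.dom →
      EEC (P.appES x (Term.var y)) (upd U x y) (upd A x y) k
  | inert {P : PCtx} {U A : Finset ℕ} {k : ℕ} {x : ℕ} {i : Term} :
      EEC P U A k → x ∈ U ∪ A → i.InertPlus → x ∉ P.dom →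
      EEC (P.appES x i) ((U.erase x) ∪ i.unv) ((A.erase x) ∪ i.anv) k
  | gc {P : PCtx} {U A : Finset ℕ} {k : ℕ} {x : ℕ} (t : Term) :
      EEC P U A k → x ∉ U ∪ A → x ∉ P.dom → EEC (P.appES x t) U A k
  | val {P : PCtx} {U A : Finset ℕ} {k : ℕ} {x : ℕ} {v : Term} :
      EEC P U A k → x ∈ U → x ∉ A → v.IsValue → x ∉ P.dom →
      EEC (P.appES x v) (U.erase x) A k
  | na {P : PCtx} {U A : Finset ℕ} {k : ℕ} {x : ℕ} :
      EEC P U A k → x ∉ A → x ∉ P.dom →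
      EEC (P.hered x HCtx.hole) (U.erase x) A (k + 1)

/-! ## Useful Open CbNeed reduction -/

inductive StepUM : Program → Program → Prop
  | mk {P : PCtx} {U A : Finset ℕ} {x : ℕ} {t u : Term} :
      MEC P U A →
      StepUM (P.plugT (Term.app (Term.lam x t) u)) (P.plugP ⟨t, [(x, u)]⟩)

inductive StepUE : Program → Program → Prop
  | mk {P : PCtx} {U A : Finset ℕ} {k : ℕ} {x : ℕ} {v : Term} :
      EEC P U A k → P.lookup x = some v → v.IsValue →
      StepUE (P.plugT (Term.var x)) (P.plugT v)

def StepUnd (p q : Program) : Prop := StepUM p q ∨ StepUE p q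

/-- Useful multiplicative steps whose evaluation context lies in Em_{U,A}. -/
def StepUMat (U A : Finset ℕ) (p q : Program) : Prop :=
  ∃ (P : PCtx) (x : ℕ) (t u : Term), MEC P U A ∧
    p = P.plugT (Term.app (Term.lam x t) u) ∧ q = P.plugP ⟨t, [(x, u)]⟩

/-- Useful exponential steps whose evaluation context lies in E@_{U,A}. -/
def StepUEat (U A : Finset ℕ) (p q : Program) : Prop :=
  ∃ (P : PCtx) (k : ℕ) (x : ℕ) (v : Term), EEC P U A k ∧
    P.lookup x = some v ∧ v.IsValue ∧
    p = P.plugT (Term.var x) ∧ q = P.plugT v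

/-! ## Useful normal-form predicates -/

inductive GenVar : ℕ → Program → Prop
  | ax (x : ℕ) : GenVar x ⟨Term.var x, []⟩
  | her {x : ℕ} {p : Program} (y : ℕ) : GenVar x p → GenVar y (p.appES x (Term.var y))
  | gc {x z : ℕ} {p : Program} (t : Term) : GenVar x p → z ≠ x → GenVar x (p.appES z t)

inductive UfAbs : Program → Prop
  | ax {v : Term} : v.IsValue → UfAbs ⟨v, []⟩
  | gv {p : Program} {x : ℕ} {v : Term} : GenVar x p → v.IsValue → UfAbs (p.appES x v)
  | gc {p : Program} {x : ℕ} (t : Term) : UfAbs p → UfAbs (p.appES x t)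

inductive UfInert : Program → Prop
  | ax {i : Term} : i.InertPlus → UfInert ⟨i, []⟩
  | gv {p : Program} {x : ℕ} {i : Term} : GenVar x p → i.InertPlus → UfInert (p.appES x i)
  | inert {p : Program} {x : ℕ} {i : Term} :
      UfInert p → x ∈ p.nv → i.Inert → UfInert (p.appES x i)
  | useless {p : Program} {x : ℕ} {v : Term} :
      UfInert p → x ∈ p.unv → x ∉ p.anv → v.IsValue → UfInert (p.appES x v)
  | gc {p : Program} {x : ℕ} (t : Term) : UfInert p → x ∉ p.nv → UfInert (p.appES x t)

def UfNorm (p : Program) : Prop := UfInert p ∨ UfAbs p ∨ ∃ x, GenVar x p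

/-! ## The size-exploding family -/

/-- t₁ := λx.λy. y x x  (x := 0, y := 1). -/
def t1 : Term := Term.lam 0 (Term.lam 1 (Term.app (Term.app (Term.var 1) (Term.var 0)) (Term.var 0)))

/-- λy. y x x. -/
def tbody : Term := Term.lam 1 (Term.app (Term.app (Term.var 1) (Term.var 0)) (Term.var 0))

/-- The family t_n (values for n ≥ 1; tfam 0 is a dummy). -/
def tfam : ℕ → Term
  | 0 => t1
  | 1 => t1
  | n + 2 => Term.lam 0 (Term.app (tfam (n + 1)) tbody)

/-- I := λz.z. -/
def Idt : Term := Term.lam 2 (Term.var 2)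

/-- The family u_n : u₀ = I, u_{n+1} = λy. y u_n u_n. -/
def ufam : ℕ → Term
  | 0 => Idt
  | n + 1 => Term.lam 1 (Term.app (Term.app (Term.var 1) (ufam n)) (ufam n))


def Rdx (r : Term) : Prop := (∃ x t u, r = Term.app (Term.lam x t) u) ∨ ∃ x, r = Term.var x

def Live (P : PCtx) (r : Term) : Prop :=
  ∀ x u, r = Term.var x → P.lookup x = some u → u.IsValue

def Below (P : PCtx) (V : Finset ℕ) (r : Term) (W : Finset ℕ) : Prop :=
  V ⊆ W ∧ ∃ x, r = Term.var x ∧ P.lookup x = none ∧ x ∈ W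

theorem inert_app {t u : Term} (h : (Term.app t u).Inert) : t.Inert ∧ u.Fireball := by
  cases h with
  | app h1 h2 => exact ⟨h1, h2⟩

theorem inert_lam {x : ℕ} {t : Term} (h : (Term.lam x t).Inert) : False := by
  cases h

theorem fire_app {t u : Term} (h : (Term.app t u).Fireball) : (Term.app t u).Inert := by
  cases h with
  | inert h => exact h

theorem plug_not_lam {H : HCtx} {r : Term} (hr : Rdx r) {x : ℕ} {t : Term}
    (h : H.plug r = Term.lam x t) : False := by
  rcases hr with ⟨_, _, _, rfl⟩ | ⟨_, rfl⟩ <;> cases H <;> simp [HCtx.plug] at h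

theorem plug_fire {r : Term} (hr : Rdx r) : ∀ {H : HCtx}, (H.plug r).Fireball → 
    (H.plug r).Inert := by
  intro H h
  cases h' : H.plug r with
  | var x => exact .var x
  | lam x t => exact (plug_not_lam hr h').elim
  | app t u => rw [h'] at h; exact fire_app h

theorem plug_inert {r : Term} (hr : Rdx r) : ∀ (H : HCtx), (H.plug r).Inert →
    ∃ x, r = Term.var x ∧ x ∈ (H.plug r).nv ∧ H.nv ⊆ (H.plug r).nv := by
  intro H
  induction H with
  | hole =>
    intro h
    rcases hr with ⟨_, _, _, rfl⟩ | ⟨x, rfl⟩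
    · exact (inert_lam (inert_app h).1).elim
    · exact ⟨x, rfl, by simp [HCtx.plug, Term.nv, HCtx.nv]⟩
  | appL H u ih =>
    intro h
    obtain ⟨x, h1, h2, h3⟩ := ih (inert_app h).1
    exact ⟨x, h1, Finset.mem_union_left _ h2, h3.trans Finset.subset_union_left⟩
  | appR i H ih =>
    intro h
    obtain ⟨x, h1, h2, h3⟩ := ih (plug_fire hr (inert_app h).2)
    exact ⟨x, h1, Finset.mem_union_right _ h2, Finset.union_subset_union_right h3⟩

def TBelow (H : HCtx) (r : Term) (H' : HCtx) : Prop :=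
  H.nv ⊆ H'.nv ∧ ∃ x, r = Term.var x ∧ x ∈ H'.nv

theorem plug_ne_hole {r r' : Term} (hr : Rdx r) (hr' : Rdx r') {H : HCtx} (hH : H.WF)
    (h : r' = H.plug r) : HCtx.hole = H ∧ r' = r := by
  rcases hr' with ⟨x, t, u, rfl⟩ | ⟨x, rfl⟩ 
  · cases H with
    | hole => exact ⟨rfl, h⟩
    | appL H s =>
      simp only [HCtx.plug, Term.app.injEq] at h
      exact (plug_not_lam hr h.1.symm).elim
    | appR i H =>
      simp only [HCtx.plug, Term.app.injEq] at h
      rw [← h.1] at hH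
      exact (inert_lam hH.1).elim
  · cases H with
    | hole => exact ⟨rfl, h⟩
    | appL H s => simp [HCtx.plug] at h
    | appR i H => simp [HCtx.plug] at h

theorem plug_tri {r₁ r₂ : Term} (hr₁ : Rdx r₁) (hr₂ : Rdx r₂) : ∀ (H₁ H₂ : HCtx),
    H₁.WF → H₂.WF → H₁.plug r₁ = H₂.plug r₂ →
    (H₁ = H₂ ∧ r₁ = r₂) ∨ TBelow H₁ r₁ H₂ ∨ TBelow H₂ r₂ H₁ := by
  intro H₁
  induction H₁ with
  | hole =>
    intro H₂ _ w2 h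
    exact .inl (plug_ne_hole hr₂ hr₁ w2 h)
  | appL K₁ s₁ ih =>
    intro H₂ w1 w2 h
    cases H₂ with
    | hole =>
      obtain ⟨h1, h2⟩ := plug_ne_hole hr₁ hr₂ w1 h.symm
      exact .inl ⟨h1.symm, h2.symm⟩
    | appL K₂ s₂ =>
      simp only [HCtx.plug, Term.app.injEq] at h
      rcases ih K₂ w1 w2 h.1 with ⟨rfl, rfl⟩ | h' | h'
      · exact .inl ⟨by rw [h.2], rfl⟩
      · exact .inr (.inl h')
      · exact .inr (.inr h')
    | appR i K₂ =>
      simp only [HCtx.plug, Term.app.injEq] at h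
      obtain ⟨x, h1, h2, h3⟩ := plug_inert hr₁ K₁ (h.1 ▸ w2.1)
      rw [h.1] at h2 h3
      exact .inr (.inl ⟨h3.trans Finset.subset_union_left, x, h1, Finset.mem_union_left _ h2⟩)
  | appR i₁ K₁ ih =>
    intro H₂ w1 w2 h
    cases H₂ with
    | hole =>
      obtain ⟨h1, h2⟩ := plug_ne_hole hr₁ hr₂ w1 h.symm
      exact .inl ⟨h1.symm, h2.symm⟩
    | appL K₂ s₂ =>
      simp only [HCtx.plug, Term.app.injEq] at h
      obtain ⟨x, h1, h2, h3⟩ := plug_inert hr₂ K₂ (h.1 ▸ w1.1)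
      rw [← h.1] at h2 h3
      exact .inr (.inr ⟨h3.trans Finset.subset_union_left, x, h1, Finset.mem_union_left _ h2⟩)
    | appR i₂ K₂ =>
      simp only [HCtx.plug, Term.app.injEq] at h
      obtain ⟨rfl, h⟩ := h
      rcases ih K₂ w1.2 w2.2 h with ⟨rfl, rfl⟩ | ⟨h1, x, h2, h3⟩ | ⟨h1, x, h2, h3⟩
      · exact .inl ⟨rfl, rfl⟩
      · exact .inr (.inl ⟨Finset.union_subset_union_right h1, x, h2, Finset.mem_union_right _ h3⟩)
      · exact .inr (.inr ⟨Finset.union_subset_union_right h1, x, h2, Finset.mem_union_right _ h3⟩)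

theorem plugT_appES (P : PCtx) (x : ℕ) (u r : Term) :
    (P.appES x u).plugT r = ⟨(P.plugT r).tm, (P.plugT r).env ++ [(x, u)]⟩ := by
  cases P <;> simp [PCtx.appES, PCtx.plugT]

theorem plugT_hered (P : PCtx) (x : ℕ) (H : HCtx) (r : Term) :
    (P.hered x H).plugT r =
      ⟨(P.plugT (.var x)).tm, (P.plugT (.var x)).env ++ [(x, H.plug r)]⟩ := by
  simp [PCtx.hered, PCtx.plugT]

theorem lookupES_append (E : Env) (x y : ℕ) (u : Term) :
    Env.lookupES (E ++ [(x, u)]) y =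
      (Env.lookupES E y).or (if x = y then some u else none) := by
  induction E with
  | nil => simp [Env.lookupES]
  | cons e E ih =>
    obtain ⟨z, s⟩ := e
    by_cases h : z = y <;> simp [Env.lookupES, h, ih]

theorem lookup_appES (P : PCtx) (x y : ℕ) (u : Term) :
    (P.appES x u).lookup y = (P.lookup y).or (if x = y then some u else none) := by
  cases P <;> simp [PCtx.appES, PCtx.lookup, lookupES_append]

theorem lookupES_none (E : Env) (x : ℕ) (h : x ∉ Env.dom E) : Env.lookupES E x = none := by
  induction E with
  | nil => rfl
  | cons e E ih =>
    obtain ⟨z, s⟩ := e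
    simp only [Env.dom, List.map_cons, List.toFinset_cons, Finset.mem_insert, not_or] at h
    simp only [Env.lookupES]
    rw [if_neg (Ne.symm h.1)]
    exact ih h.2

theorem lookup_none (P : PCtx) (x : ℕ) (h : x ∉ P.dom) : P.lookup x = none := by
  cases P with
  | tc H E => exact lookupES_none _ _ h
  | ec t E1 y H E2 =>
    simp only [PCtx.dom, Finset.mem_insert, Finset.mem_union, not_or] at h
    exact lookupES_none _ _ h.2.2

theorem snoc_inj {t t' : Term} {E E' : Env} {x x' : ℕ} {u u' : Term}
    (h : (⟨t, E ++ [(x, u)]⟩ : Program) = ⟨t', E' ++ [(x', u')]⟩) :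
    t = t' ∧ E = E' ∧ x = x' ∧ u = u' := by
  simp only [Program.mk.injEq] at h
  obtain ⟨h1, h2⟩ := h
  have := List.append_inj' h2 rfl
  simp at this
  tauto

theorem inv_nil {P : PCtx} {V : Finset ℕ} {r t : Term} (h : OEC P V)
    (hp : P.plugT r = ⟨t, []⟩) :
    ∃ H : HCtx, P = .tc H [] ∧ V = H.nv ∧ H.WF ∧ H.plug r = t := by
  cases h with
  | @ax H w => exact ⟨H, rfl, rfl, w, by simpa [PCtx.plugT] using hp⟩
  | gc => simp [plugT_appES] at hp
  | inert => simp [plugT_appES] at hp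
  | her => simp [plugT_hered] at hp

theorem inv_snoc {P : PCtx} {V : Finset ℕ} {r t : Term} {E : Env} {x : ℕ} {u : Term}
    (h : OEC P V) (hp : P.plugT r = ⟨t, E ++ [(x, u)]⟩) :
    (∃ P' V', P = P'.appES x u ∧ OEC P' V' ∧ P'.plugT r = ⟨t, E⟩ ∧
      ((x ∉ V' ∧ V = V') ∨ (x ∈ V' ∧ u.Inert ∧ V = V'.erase x ∪ u.nv))) ∨
    (∃ P' V' H, P = P'.hered x H ∧ OEC P' V' ∧ P'.plugT (.var x) = ⟨t, E⟩ ∧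
      x ∉ V' ∧ P'.lookup x = none ∧ H.WF ∧ V = V' ∪ H.nv ∧ H.plug r = u) := by
  cases h with
  | ax w => simp [PCtx.plugT] at hp
  | @gc P' _ y s h1 h2 h3 =>
    rw [plugT_appES] at hp
    obtain ⟨rfl, rfl, rfl, rfl⟩ := snoc_inj hp
    exact .inl ⟨P', _, rfl, h1, rfl, .inl ⟨h2, rfl⟩⟩
  | @inert P' V' y s h1 h2 h3 h4 =>
    rw [plugT_appES] at hp
    obtain ⟨rfl, rfl, rfl, rfl⟩ := snoc_inj hp
    exact .inl ⟨P', V', rfl, h1, rfl, .inr ⟨h2, h3, rfl⟩⟩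
  | @her P' V' y H h1 h2 h3 h4 =>
    rw [plugT_hered] at hp
    obtain ⟨rfl, rfl, rfl, rfl⟩ := snoc_inj hp
    exact .inr ⟨P', V', H, rfl, h1, rfl, h2, lookup_none _ _ h3, h4, rfl, rfl⟩

theorem live_inner {P : PCtx} {x : ℕ} {u r : Term} (h : Live (P.appES x u) r) : Live P r := by
  intro y s hy hs
  exact h y s hy (by rw [lookup_appES, hs]; rfl)

theorem live_none {P : PCtx} {x : ℕ} (h : P.lookup x = none) : Live P (.var x) := by
  intro y s hy hs
  cases hy
  rw [h] at hs
  cases hs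

/-- both contexts pass over the last substitution -/
theorem pass_pass {P₁ : PCtx} {V₁ V₂ W₁ W₂ : Finset ℕ} {r₁ u : Term} {x : ℕ}
    (l₁ : Live (P₁.appES x u) r₁)
    (c₁ : (x ∉ V₁ ∧ W₁ = V₁) ∨ (x ∈ V₁ ∧ u.Inert ∧ W₁ = V₁.erase x ∪ u.nv))
    (c₂ : (x ∉ V₂ ∧ W₂ = V₂) ∨ (x ∈ V₂ ∧ u.Inert ∧ W₂ = V₂.erase x ∪ u.nv))
    (b : Below P₁ V₁ r₁ V₂) : Below (P₁.appES x u) W₁ r₁ W₂ := by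
  obtain ⟨hs, y, rfl, hn, hy⟩ := b
  have hxy : x ≠ y := by
    rintro rfl
    rcases c₂ with ⟨c, _⟩ | ⟨_, hi, _⟩
    · exact c hy
    · obtain ⟨z, s, rfl⟩ := l₁ x u rfl (by rw [lookup_appES, hn]; simp)
      exact inert_lam hi
  refine ⟨?_, y, rfl, by rw [lookup_appES, hn]; simp [hxy], ?_⟩
  · intro z hz
    have h1 := @hs z
    have h2 := @hs x
    rcases c₁ with ⟨c, rfl⟩ | ⟨c, _, rfl⟩ <;> rcases c₂ with ⟨d, rfl⟩ | ⟨d, _, rfl⟩ <;> grind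
  · rcases c₂ with ⟨d, rfl⟩ | ⟨d, _, rfl⟩
    · exact hy
    · simp [hy, hxy.symm]

theorem her_pass {P₁ P₂ : PCtx} {V₁ V₂ W₂ : Finset ℕ} {r₁ r₂ : Term} {x : ℕ} {H : HCtx}
    (hr₁ : Rdx r₁) (l₂ : Live (P₂.appES x (H.plug r₁)) r₂)
    (hx : x ∉ V₁) (hn : P₁.lookup x = none)
    (c₂ : (x ∉ V₂ ∧ W₂ = V₂) ∨
      (x ∈ V₂ ∧ (H.plug r₁).Inert ∧ W₂ = V₂.erase x ∪ (H.plug r₁).nv))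
    (b : (P₁ = P₂ ∧ V₁ = V₂ ∧ Term.var x = r₂) ∨ Below P₁ V₁ (.var x) V₂ ∨
      Below P₂ V₂ r₂ V₁) :
    Below (P₁.hered x H) (V₁ ∪ H.nv) r₁ W₂ ∨
      Below (P₂.appES x (H.plug r₁)) W₂ r₂ (V₁ ∪ H.nv) := by
  rcases b with ⟨rfl, rfl, rfl⟩ | ⟨hs, y, hy, _, hm⟩ | ⟨hs, y, rfl, hn2, hm⟩
  · exfalso
    obtain ⟨z, s, hz⟩ := l₂ x (H.plug r₁) rfl (by rw [lookup_appES, hn]; simp)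
    exact plug_not_lam hr₁ hz
  · left
    cases hy
    rcases c₂ with ⟨d, rfl⟩ | ⟨d, hi, rfl⟩
    · exact (d hm).elim
    · obtain ⟨y, rfl, h2, h3⟩ := plug_inert hr₁ H hi
      refine ⟨?_, y, rfl, rfl, Finset.mem_union_right _ h2⟩
      refine Finset.union_subset_union ?_ h3
      intro z hz
      exact Finset.mem_erase.2 ⟨fun e => hx (e ▸ hz), hs hz⟩
  · right
    have hxy : x ≠ y := by rintro rfl; exact hx hm
    rcases c₂ with ⟨d, rfl⟩ | ⟨d, hi, rfl⟩
    · exact ⟨hs.trans Finset.subset_union_left, y, rfl,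
        by rw [lookup_appES, hn2]; simp [hxy], Finset.mem_union_left _ hm⟩
    · exact (hx (hs d)).elim

theorem tri (t : Term) (E : Env) : ∀ (P₁ P₂ : PCtx) (V₁ V₂ : Finset ℕ) (r₁ r₂ : Term),
    Rdx r₁ → Rdx r₂ → OEC P₁ V₁ → OEC P₂ V₂ → Live P₁ r₁ → Live P₂ r₂ →
    P₁.plugT r₁ = ⟨t, E⟩ → P₂.plugT r₂ = ⟨t, E⟩ →
    (P₁ = P₂ ∧ V₁ = V₂ ∧ r₁ = r₂) ∨ Below P₁ V₁ r₁ V₂ ∨ Below P₂ V₂ r₂ V₁ := by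
  induction E using List.reverseRecOn with
  | nil =>
    intro P₁ P₂ V₁ V₂ r₁ r₂ hr₁ hr₂ o₁ o₂ _ _ e₁ e₂
    obtain ⟨H₁, rfl, rfl, w₁, k₁⟩ := inv_nil o₁ e₁
    obtain ⟨H₂, rfl, rfl, w₂, k₂⟩ := inv_nil o₂ e₂
    rcases plug_tri hr₁ hr₂ H₁ H₂ w₁ w₂ (k₁.trans k₂.symm) with
      ⟨rfl, rfl⟩ | ⟨h1, x, rfl, h2⟩ | ⟨h1, x, rfl, h2⟩
    · exact .inl ⟨rfl, rfl, rfl⟩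
    · exact .inr (.inl ⟨h1, x, rfl, rfl, h2⟩)
    · exact .inr (.inr ⟨h1, x, rfl, rfl, h2⟩)
  | append_singleton E e ih =>
    obtain ⟨x, u⟩ := e
    intro P₁ P₂ V₁ V₂ r₁ r₂ hr₁ hr₂ o₁ o₂ l₁ l₂ e₁ e₂
    rcases inv_snoc o₁ e₁ with ⟨Q₁, W₁, rfl, q₁, f₁, c₁⟩ |
        ⟨Q₁, W₁, H₁, rfl, q₁, f₁, n₁, k₁, w₁, rfl, g₁⟩ <;>
      rcases inv_snoc o₂ e₂ with ⟨Q₂, W₂, rfl, q₂, f₂, c₂⟩ |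
        ⟨Q₂, W₂, H₂, rfl, q₂, f₂, n₂, k₂, w₂, rfl, g₂⟩
    · rcases ih Q₁ Q₂ W₁ W₂ r₁ r₂ hr₁ hr₂ q₁ q₂ (live_inner l₁) (live_inner l₂) f₁ f₂ with
        ⟨rfl, rfl, rfl⟩ | b | b
      · refine .inl ⟨rfl, ?_, rfl⟩
        rcases c₁ with ⟨c, rfl⟩ | ⟨c, _, rfl⟩ <;> rcases c₂ with ⟨d, rfl⟩ | ⟨d, _, rfl⟩ <;>
          first | rfl | exact (c d).elim | exact (d c).elim
      · exact .inr (.inl (pass_pass l₁ c₁ c₂ b))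
      · exact .inr (.inr (pass_pass l₂ c₂ c₁ b))
    · have b := ih Q₂ Q₁ W₂ W₁ _ r₁ (.inr ⟨x, rfl⟩) hr₁ q₂ q₁ (live_none k₂)
        (live_inner l₁) f₂ f₁
      subst g₂
      exact .inr (her_pass hr₂ l₁ n₂ k₂ c₁ b).symm
    · have b := ih Q₁ Q₂ W₁ W₂ _ r₂ (.inr ⟨x, rfl⟩) hr₂ q₁ q₂ (live_none k₁)
        (live_inner l₂) f₁ f₂
      subst g₁
      exact .inr (her_pass hr₁ l₂ n₁ k₁ c₂ b)
    · rcases ih Q₁ Q₂ W₁ W₂ _ _ (.inr ⟨x, rfl⟩) (.inr ⟨x, rfl⟩) q₁ q₂ (live_none k₁)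
        (live_none k₂) f₁ f₂ with ⟨rfl, rfl, _⟩ | ⟨_, y, hy, _, hm⟩ | ⟨_, y, hy, _, hm⟩
      · rcases plug_tri hr₁ hr₂ H₁ H₂ w₁ w₂ (g₁.trans g₂.symm) with
          ⟨rfl, rfl⟩ | ⟨h1, x, rfl, h2⟩ | ⟨h1, x, rfl, h2⟩
        · exact .inl ⟨rfl, rfl, rfl⟩
        · exact .inr (.inl ⟨Finset.union_subset_union_right h1, x, rfl, rfl,
            Finset.mem_union_right _ h2⟩)
        · exact .inr (.inr ⟨Finset.union_subset_union_right h1, x, rfl, rfl,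
            Finset.mem_union_right _ h2⟩)
      · cases hy; exact (n₂ hm).elim
      · cases hy; exact (n₁ hm).elim

def Ctr (P : PCtx) (r : Term) (q : Program) : Prop :=
  (∃ x t u, r = Term.app (Term.lam x t) u ∧ q = P.plugP ⟨t, [(x, u)]⟩) ∨
  (∃ x v, r = Term.var x ∧ P.lookup x = some v ∧ v.IsValue ∧ q = P.plugT v)

theorem step_ctr {p q : Program} (h : StepOnd p q) :
    ∃ P V r, OEC P V ∧ P.plugT r = p ∧ Ctr P r q := by
  rcases h with h | h
  · cases h with
    | mk h => exact ⟨_, _, _, h, rfl, .inl ⟨_, _, _, rfl, rfl⟩⟩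
  · cases h with
    | mk h l v => exact ⟨_, _, _, h, rfl, .inr ⟨_, _, rfl, l, v, rfl⟩⟩

theorem ctr_rdx {P r q} (h : Ctr P r q) : Rdx r := by
  rcases h with ⟨x, t, u, h, _⟩ | ⟨x, v, h, _⟩
  · exact .inl ⟨x, t, u, h⟩
  · exact .inr ⟨x, h⟩

theorem ctr_live {P r q} (h : Ctr P r q) : Live P r := by
  rintro y s rfl hs
  rcases h with ⟨x, t, u, h, _⟩ | ⟨x, v, h, hl, hv, _⟩
  · cases h
  · cases h
    rw [hl] at hs
    cases hs
    exact hv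

theorem ctr_below {P r q V W} (h : Ctr P r q) (b : Below P V r W) : False := by
  obtain ⟨_, y, rfl, hn, _⟩ := b
  rcases h with ⟨x, t, u, h, _⟩ | ⟨x, v, h, hl, hv, _⟩
  · cases h
  · cases h
    rw [hl] at hn
    cases hn

/-- determinism of Open CbNeed. -/
theorem StepOnd_deterministic :
    ∀ p q₁ q₂ : Program, StepOnd p q₁ → StepOnd p q₂ → q₁ = q₂ := by
  intro p q₁ q₂ h₁ h₂
  obtain ⟨P₁, V₁, r₁, o₁, e₁, c₁⟩ := step_ctr h₁
  obtain ⟨P₂, V₂, r₂, o₂, e₂, c₂⟩ := step_ctr h₂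
  rcases tri p.tm p.env P₁ P₂ V₁ V₂ r₁ r₂ (ctr_rdx c₁) (ctr_rdx c₂) o₁ o₂ (ctr_live c₁)
    (ctr_live c₂) e₁ e₂ with ⟨rfl, rfl, rfl⟩ | b | b
  · rcases c₁ with ⟨x, t, u, rfl, rfl⟩ | ⟨x, v, rfl, hl, hv, rfl⟩ <;>
      rcases c₂ with ⟨x', t', u', h, rfl⟩ | ⟨x', v', h, hl', hv', rfl⟩ <;> cases h
    · rfl
    · rw [hl] at hl'
      cases hl'
      rfl
  · exact (ctr_below c₁ b).elim
  · exact (ctr_below c₂ b).elim
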